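/- (Predictable quadratic variations of the RWG indicator martingales.) Let N^J_n = Σ_{ℓ=1}^n (j_ℓ − E[j_ℓ | F_{ℓ−1}]) and N^K_n = Σ_{ℓ=1}^n (k_ℓ − E[k_ℓ | F_{ℓ−1}]), and J_n = Σ_{ℓ=0}^n j_ℓ. Then for every n ≥ 1, almost surely Σ_{ℓ=1}^n ( E[j_ℓ² | F_{ℓ−1}] − (E[j_ℓ | F_{ℓ−1}])² ) = 2p(1−p)(n + J_{n−1}) and Σ_{ℓ=1}^n ( E[k_ℓ² | F_{ℓ−1}] − (E[k_ℓ | F_{ℓ−1}])² ) = 2p(1−p)(n + J_{n−1}); consequently, if p > 0, both, divided by n, converge almost surely to 4p(1−p)/(2−p). -/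

import Mathlib

open MeasureTheory ProbabilityTheory Real Filter Set
open scoped BigOperators NNReal

noncomputable section

namespace RWG

abbrev E : Type := EuclideanSpace ℝ (Fin 3)

def vec (x y z : ℝ) : E := (EuclideanSpace.equiv (Fin 3) ℝ).symm ![x, y, z]

/-- The four families of vertices of the `2h` graphite lattice. -/
def V (a h : ℝ) (i j : Fin 2) : Set E :=
  {v | ∃ k l n : ℤ, v =
    vec (a * ((-1 : ℝ) ^ ((i : ℕ) + 1) * (if j = 1 then (1 : ℝ) else 0) + (3 / 2) * k))
        (a * ((Real.sqrt 3 / 2) * k + Real.sqrt 3 * l))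
        (h * (2 * n + (if i ≠ j then (1 : ℝ) else 0)))}

/-- Horizontal jump from a vertex of horizontal type `i` in direction `k`. -/
def w (a : ℝ) (i : Fin 2) (k : Fin 3) : E :=
  vec (a * Real.cos (2 * (k : ℕ) * π / 3 + (i : ℕ) * π))
      (a * Real.sin (2 * (k : ℕ) * π / 3 + (i : ℕ) * π)) 0

/-- `S` is a random walk on graphite with parameters `a, h, p, α, q` and natural filtration `F`. -/
structure IsRWG {Ω : Type} [MeasurableSpace Ω] (P : Measure Ω)
    (a h p α : ℝ) (q : Fin 2 → Fin 2 → Fin 3 → ℝ)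
    (S : ℕ → Ω → E) (F : ℕ → MeasurableSpace Ω) : Prop where
  prob : IsProbabilityMeasure P
  ha : 0 < a
  hh : 0 < h
  hp0 : 0 ≤ p
  hp1 : p ≤ 1
  hα0 : 0 < α
  hα1 : α < 1
  hq : ∀ i j k, 0 ≤ q i j k
  hqsum0 : ∀ i, q i 0 0 + q i 0 1 + q i 0 2 = 1 - p
  hqsum1 : ∀ i, q i 1 0 + q i 1 1 + q i 1 2 = 1
  hS0 : ∀ ω, S 0 ω = 0
  hSmeas : ∀ n, Measurable (S n)
  hF : ∀ n, F n =
    MeasurableSpace.comap (fun ω (k : Fin n) => S ((k : ℕ) + 1) ω - S (k : ℕ) ω)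
      MeasurableSpace.pi
  hTrans : ∀ (n : ℕ) (f : E → ℝ), Measurable f → (∃ C, ∀ x, |f x| ≤ C) →
    P[fun ω => f (S (n + 1) ω)|F n] =ᵐ[P]
      fun ω => ∑ i : Fin 2,
        ((V a h i 0).indicator (fun _ => (1 : ℝ)) (S n ω) *
          (α * p * f (S n ω + vec 0 0 h) + (1 - α) * p * f (S n ω + vec 0 0 (-h)) +
            ∑ k : Fin 3, q i 0 k * f (S n ω + w a i k)) +
        (V a h i 1).indicator (fun _ => (1 : ℝ)) (S n ω) *
          ∑ k : Fin 3, q i 1 k * f (S n ω + w a i k))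

def uu (q : Fin 2 → Fin 2 → Fin 3 → ℝ) (i j : Fin 2) : ℝ := q i j 1 + q i j 2

def vv (q : Fin 2 → Fin 2 → Fin 3 → ℝ) (i j : Fin 2) : ℝ := q i j 1 - q i j 2

def ss (q : Fin 2 → Fin 2 → Fin 3 → ℝ) (i j : Fin 2) : ℝ := uu q i j * (1 - uu q i j)

def tt (q : Fin 2 → Fin 2 → Fin 3 → ℝ) (i j : Fin 2) : ℝ := vv q i j * (uu q i j - 1)

/-- The vector `μ` of the RWG. -/
def muG (a h p α : ℝ) (q : Fin 2 → Fin 2 → Fin 3 → ℝ) : E :=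
  vec (3 * a / 8 * (-(uu q 0 0 + uu q 0 1) + (uu q 1 0 + uu q 1 1)))
      (a * Real.sqrt 3 / 8 * ((vv q 0 0 + vv q 0 1) - (vv q 1 0 + vv q 1 1)))
      (h * p / 2 * (2 * α - 1))

/-- The vector `m` of the RWG. -/
def mG (a h p α : ℝ) (q : Fin 2 → Fin 2 → Fin 3 → ℝ) : E :=
  vec (3 * a / 8 * (-(uu q 0 0 - uu q 0 1) + (uu q 1 0 - uu q 1 1)))
      (a * Real.sqrt 3 / 8 * ((vv q 0 0 - vv q 0 1) - (vv q 1 0 - vv q 1 1)))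
      (h * p / 2 * (2 * α - 1))

/-- The vector `θ` of the RWG. -/
def thetaG (a p : ℝ) (q : Fin 2 → Fin 2 → Fin 3 → ℝ) : E :=
  vec (a * ((1 - p / 2) - 3 / 8 * ((uu q 0 0 + uu q 0 1) + (uu q 1 0 + uu q 1 1))))
      (a * Real.sqrt 3 / 8 * ((vv q 0 0 + vv q 0 1) + (vv q 1 0 + vv q 1 1))) 0

/-- The vector `ρ` of the RWG. -/
def rhoG (a p : ℝ) (q : Fin 2 → Fin 2 → Fin 3 → ℝ) : E :=
  vec (a * (-(p / 2) - 3 / 8 * ((uu q 0 0 - uu q 0 1) + (uu q 1 0 - uu q 1 1))))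
      (a * Real.sqrt 3 / 8 * ((vv q 0 0 - vv q 0 1) + (vv q 1 0 - vv q 1 1))) 0

/-- The vector `ζ = (0, 0, hp(2α−1))`. -/
def zetaG (h p α : ℝ) : E := vec 0 0 (h * p * (2 * α - 1))

/-- The indicator process `i_n`. -/
def iP {Ω : Type} (a h : ℝ) (S : ℕ → Ω → E) (n : ℕ) (ω : Ω) : ℝ :=
  (V a h 0 0 ∪ V a h 0 1).indicator (fun _ => (1 : ℝ)) (S n ω) -
    (V a h 1 0 ∪ V a h 1 1).indicator (fun _ => (1 : ℝ)) (S n ω)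

/-- The indicator process `j_n`. -/
def jP {Ω : Type} (a h : ℝ) (S : ℕ → Ω → E) (n : ℕ) (ω : Ω) : ℝ :=
  (V a h 0 0 ∪ V a h 1 0).indicator (fun _ => (1 : ℝ)) (S n ω) -
    (V a h 0 1 ∪ V a h 1 1).indicator (fun _ => (1 : ℝ)) (S n ω)

/-- The indicator process `k_n`. -/
def kP {Ω : Type} (a h : ℝ) (S : ℕ → Ω → E) (n : ℕ) (ω : Ω) : ℝ :=
  (V a h 0 0 ∪ V a h 1 1).indicator (fun _ => (1 : ℝ)) (S n ω) -
    (V a h 0 1 ∪ V a h 1 0).indicator (fun _ => (1 : ℝ)) (S n ω)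

/-- The matrix `σ²` of the RWG. -/
def sigmaG (a h p α : ℝ) (q : Fin 2 → Fin 2 → Fin 3 → ℝ) : Matrix (Fin 3) (Fin 3) ℝ :=
  !![a ^ 2 / 4 * (2 * p * (1 - p) + 9 / 4 * (ss q 0 0 + ss q 1 0 + ss q 0 1 + ss q 1 1)
        - 3 * p * (uu q 0 0 + uu q 1 0)),
     a ^ 2 * Real.sqrt 3 / 16 * (3 * (tt q 0 0 + tt q 1 0 + tt q 0 1 + tt q 1 1)
        + 2 * p * (vv q 0 0 + vv q 1 0)),
     a * h / 8 * (-4 * p * (1 - p) * (2 * α - 1)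
        + 3 * p * (2 * α - 1) * (uu q 0 0 + uu q 1 0));
     a ^ 2 * Real.sqrt 3 / 16 * (3 * (tt q 0 0 + tt q 1 0 + tt q 0 1 + tt q 1 1)
        + 2 * p * (vv q 0 0 + vv q 1 0)),
     3 * a ^ 2 / 16 * ((uu q 0 0 + uu q 1 0 + uu q 0 1 + uu q 1 1)
        - ((vv q 0 0) ^ 2 + (vv q 1 0) ^ 2 + (vv q 0 1) ^ 2 + (vv q 1 1) ^ 2)),
     -(a * h * Real.sqrt 3 / 8) * (p * (2 * α - 1) * (vv q 0 0 + vv q 1 0));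
     a * h / 8 * (-4 * p * (1 - p) * (2 * α - 1)
        + 3 * p * (2 * α - 1) * (uu q 0 0 + uu q 1 0)),
     -(a * h * Real.sqrt 3 / 8) * (p * (2 * α - 1) * (vv q 0 0 + vv q 1 0)),
     h ^ 2 * p / 2 * (1 - p * (2 * α - 1) ^ 2)]

/-- The matrix `γ` of the RWG. -/
def gammaG (a h p α : ℝ) (q : Fin 2 → Fin 2 → Fin 3 → ℝ) : Matrix (Fin 3) (Fin 3) ℝ :=
  !![a ^ 2 / 4 * (2 * p * (1 - p) + 9 / 4 * (ss q 0 0 + ss q 1 0 - ss q 0 1 - ss q 1 1)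
        - 3 * p * (uu q 0 0 + uu q 1 0)),
     a ^ 2 * Real.sqrt 3 / 16 * (3 * (tt q 0 0 + tt q 1 0 - tt q 0 1 - tt q 1 1)
        + 2 * p * (vv q 0 0 + vv q 1 0)),
     a * h / 8 * (-4 * p * (1 - p) * (2 * α - 1)
        + 3 * p * (2 * α - 1) * (uu q 0 0 + uu q 1 0));
     a ^ 2 * Real.sqrt 3 / 16 * (3 * (tt q 0 0 + tt q 1 0 - tt q 0 1 - tt q 1 1)
        + 2 * p * (vv q 0 0 + vv q 1 0)),
     3 * a ^ 2 / 16 * ((uu q 0 0 + uu q 1 0 - uu q 0 1 - uu q 1 1)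
        - ((vv q 0 0) ^ 2 + (vv q 1 0) ^ 2 - (vv q 0 1) ^ 2 - (vv q 1 1) ^ 2)),
     -(a * h * Real.sqrt 3 / 8) * (p * (2 * α - 1) * (vv q 0 0 + vv q 1 0));
     a * h / 8 * (-4 * p * (1 - p) * (2 * α - 1)
        + 3 * p * (2 * α - 1) * (uu q 0 0 + uu q 1 0)),
     -(a * h * Real.sqrt 3 / 8) * (p * (2 * α - 1) * (vv q 0 0 + vv q 1 0)),
     h ^ 2 * p / 2 * (1 - p * (2 * α - 1) ^ 2)]

/-- The matrix `δ` of the RWG. -/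
def deltaG (a h p α : ℝ) (q : Fin 2 → Fin 2 → Fin 3 → ℝ) : Matrix (Fin 3) (Fin 3) ℝ :=
  !![a ^ 2 / 4 * (9 / 4 * (ss q 0 0 - ss q 1 0 - ss q 0 1 + ss q 1 1)
        - 3 * p * (uu q 0 0 - uu q 1 0)),
     a ^ 2 * Real.sqrt 3 / 16 * (3 * (tt q 0 0 - tt q 1 0 - tt q 0 1 + tt q 1 1)
        + 2 * p * (vv q 0 0 - vv q 1 0)),
     a * h / 8 * (3 * p * (2 * α - 1) * (uu q 0 0 - uu q 1 0));
     a ^ 2 * Real.sqrt 3 / 16 * (3 * (tt q 0 0 - tt q 1 0 - tt q 0 1 + tt q 1 1)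
        + 2 * p * (vv q 0 0 - vv q 1 0)),
     3 * a ^ 2 / 16 * ((uu q 0 0 - uu q 1 0 - uu q 0 1 + uu q 1 1)
        - ((vv q 0 0) ^ 2 - (vv q 1 0) ^ 2 - (vv q 0 1) ^ 2 + (vv q 1 1) ^ 2)),
     -(a * h * Real.sqrt 3 / 8) * (p * (2 * α - 1) * (vv q 0 0 - vv q 1 0));
     a * h / 8 * (3 * p * (2 * α - 1) * (uu q 0 0 - uu q 1 0)),
     -(a * h * Real.sqrt 3 / 8) * (p * (2 * α - 1) * (vv q 0 0 - vv q 1 0)),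
     0]

/-- A probability measure on `ℝ³` is the centered Gaussian law with covariance matrix `Γ`
if every linear functional pushes it to the corresponding one-dimensional Gaussian law. -/
def IsCenteredGaussian (G : Measure E) (Γ : Matrix (Fin 3) (Fin 3) ℝ) : Prop :=
  IsProbabilityMeasure G ∧
    ∀ u : Fin 3 → ℝ, G.map (fun x => ∑ r, u r * x r) =
      gaussianReal 0 (Real.toNNReal (∑ r, ∑ c, u r * Γ r c * u c))

/-- View a point of `ℝ³` as a plain function on indices. -/
def toFun (x : E) : Fin 3 → ℝ := x

end RWG

namespace RWG

/-- `I_n = ∑_{ℓ=0}^n i_ℓ`. -/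
def IG {Ω : Type} (a h : ℝ) (S : ℕ → Ω → E) (n : ℕ) (ω : Ω) : ℝ :=
  ∑ l ∈ Finset.range (n + 1), iP a h S l ω

/-- `J_n = ∑_{ℓ=0}^n j_ℓ`. -/
def JG {Ω : Type} (a h : ℝ) (S : ℕ → Ω → E) (n : ℕ) (ω : Ω) : ℝ :=
  ∑ l ∈ Finset.range (n + 1), jP a h S l ω

/-- `K_n = ∑_{ℓ=0}^n k_ℓ`. -/
def KG {Ω : Type} (a h : ℝ) (S : ℕ → Ω → E) (n : ℕ) (ω : Ω) : ℝ :=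
  ∑ l ∈ Finset.range (n + 1), kP a h S l ω

end RWG

/-! The type `(i, j)` of the current vertex is itself a Markov chain. It changes deterministically
from a vertex with `j = 1`; from a vertex with `j = 0` only the next `j` is random, and each of the
processes `j` and `k` then takes one of its two signs with probability `p`. Both conditional
variances are therefore `4p(1-p)` on `{j = 0}` and `0` elsewhere, that is, `2p(1-p)(1 + j_n)`.

For the limit, `E[j_{n+1} | F_n] = p - (1-p) j_n`, so the compensator of `j` is
`n p - (2-p) ∑_{l<n} j_l`. Since the martingale part of `j` has bounded increments, it is `o(n)`
almost surely by the martingale law of large numbers, and the averages of `j` tend to `p/(2-p)`. -/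

section MartingaleLaw

open scoped Topology

/-- **Kronecker's lemma** for the weights `n + 1`. -/
lemma tendsto_sum_div_of_tendsto_sum_div_succ {x : ℕ → ℝ} {l : ℝ}
    (h : Tendsto (fun n => ∑ k ∈ Finset.range n, x k / (k + 1)) atTop (𝓝 l)) :
    Tendsto (fun n : ℕ => (∑ k ∈ Finset.range n, x k) / n) atTop (𝓝 0) := by
  set s : ℕ → ℝ := fun n => ∑ k ∈ Finset.range n, x k / (k + 1)
  have hparts (n : ℕ) : ∑ k ∈ Finset.range n, x k = n * s n - ∑ k ∈ Finset.range n, s k := by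
    induction n with
    | zero => simp
    | succ n ih =>
      have hstep : s (n + 1) = s n + x n / (n + 1) := Finset.sum_range_succ _ n
      rw [Finset.sum_range_succ, Finset.sum_range_succ, ih, hstep]
      push_cast
      field_simp
      ring
  have hdiff : Tendsto (fun n : ℕ => s n - (n : ℝ)⁻¹ * ∑ k ∈ Finset.range n, s k) atTop (𝓝 0) := by
    simpa only [sub_self] using h.sub h.cesaro
  refine hdiff.congr' ?_
  filter_upwards [eventually_ne_atTop 0] with n hn
  rw [hparts]
  field_simp

variable {Ω : Type*} {mΩ : MeasurableSpace Ω} {μ : Measure Ω}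
  {ℱ : Filtration ℕ mΩ} {f : ℕ → Ω → ℝ}

lemma martingale_condExp_sub_succ (hf : Martingale f ℱ μ) (n : ℕ) :
    μ[f (n + 1) - f n | ℱ n] =ᵐ[μ] 0 := by
  filter_upwards [condExp_sub (hf.integrable (n + 1)) (hf.integrable n) (ℱ n),
    hf.condExp_ae_eq n.le_succ, hf.condExp_ae_eq (le_refl n)] with ω hsub hsucc hself
  simp [hsub, hsucc, hself]

lemma martingale_integral_mul_sub_succ [SigmaFiniteFiltration μ ℱ] (hf : Martingale f ℱ μ)
    (hL2 : ∀ n, MemLp (f n) 2 μ) (n : ℕ) : ∫ ω, f n ω * (f (n + 1) ω - f n ω) ∂μ = 0 := by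
  have hpull : μ[f n * (f (n + 1) - f n) | ℱ n] =ᵐ[μ] f n * μ[f (n + 1) - f n | ℱ n] :=
    condExp_mul_of_stronglyMeasurable_left (hf.stronglyMeasurable n)
      ((hL2 n).integrable_mul ((hL2 (n + 1)).sub (hL2 n)))
      ((hf.integrable (n + 1)).sub (hf.integrable n))
  calc ∫ ω, f n ω * (f (n + 1) ω - f n ω) ∂μ
      = ∫ ω, (μ[f n * (f (n + 1) - f n) | ℱ n]) ω ∂μ := (integral_condExp (ℱ.le n)).symm
    _ = 0 := by
      refine integral_eq_zero_of_ae ?_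
      filter_upwards [hpull, martingale_condExp_sub_succ hf n] with ω hmul hzero
      simp [hmul, hzero]

lemma martingale_integral_sq_eq_sum [SigmaFiniteFiltration μ ℱ] (hf : Martingale f ℱ μ)
    (hL2 : ∀ n, MemLp (f n) 2 μ) (n : ℕ) :
    ∫ ω, f n ω ^ 2 ∂μ =
      ∫ ω, f 0 ω ^ 2 ∂μ + ∑ k ∈ Finset.range n, ∫ ω, (f (k + 1) ω - f k ω) ^ 2 ∂μ := by
  induction n with
  | zero => simp
  | succ n ih =>
    have hcross : Integrable (fun ω => 2 * (f n ω * (f (n + 1) ω - f n ω))) μ :=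
      ((hL2 n).integrable_mul ((hL2 (n + 1)).sub (hL2 n))).const_mul 2
    have hincr : Integrable (fun ω => (f (n + 1) ω - f n ω) ^ 2) μ :=
      ((hL2 (n + 1)).sub (hL2 n)).integrable_sq
    calc ∫ ω, f (n + 1) ω ^ 2 ∂μ
        = ∫ ω, (f n ω ^ 2 + 2 * (f n ω * (f (n + 1) ω - f n ω)) +
            (f (n + 1) ω - f n ω) ^ 2) ∂μ := by
          congr with ω
          ring
      _ = ∫ ω, f n ω ^ 2 ∂μ + ∫ ω, (f (n + 1) ω - f n ω) ^ 2 ∂μ := by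
          rw [integral_add (by exact (hL2 n).integrable_sq.add hcross) hincr,
            integral_add (hL2 n).integrable_sq hcross, integral_const_mul,
            martingale_integral_mul_sub_succ hf hL2, mul_zero, add_zero]
      _ = _ := by rw [ih, Finset.sum_range_succ, add_assoc]

variable [IsFiniteMeasure μ]

lemma martingale_sum_const_mul_sub (hf : Martingale f ℱ μ) (c : ℕ → ℝ) :
    Martingale (fun n ω => ∑ k ∈ Finset.range n, c k * (f (k + 1) ω - f k ω)) ℱ μ := by
  refine martingale_of_condExp_sub_eq_zero_nat (fun n => ?_) (fun n => ?_) fun n => ?_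
  · exact Finset.stronglyMeasurable_fun_sum _ fun k hk =>
      (((hf.stronglyMeasurable (k + 1)).mono (ℱ.mono (Finset.mem_range.1 hk))).sub
        ((hf.stronglyMeasurable k).mono (ℱ.mono (Finset.mem_range.1 hk).le))).const_mul (c k)
  · exact integrable_finsetSum _ fun k _ =>
      ((hf.integrable (k + 1)).sub (hf.integrable k)).const_mul (c k)
  · have hincr : (fun ω => ∑ k ∈ Finset.range (n + 1), c k * (f (k + 1) ω - f k ω)) -
        (fun ω => ∑ k ∈ Finset.range n, c k * (f (k + 1) ω - f k ω)) =
        c n • (f (n + 1) - f n) := by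
      ext ω
      simp [Finset.sum_range_succ]
    rw [hincr]
    filter_upwards [condExp_smul (c n) (f (n + 1) - f n) (ℱ n),
      martingale_condExp_sub_succ hf n] with ω hsmul hzero
    simp [hsmul, hzero]

lemma martingale_ae_exists_tendsto_of_integral_sq_le {C : ℝ} (hf : Martingale f ℱ μ)
    (hL2 : ∀ n, MemLp (f n) 2 μ) (hC : ∀ n, ∫ ω, f n ω ^ 2 ∂μ ≤ C) :
    ∀ᵐ ω ∂μ, ∃ l, Tendsto (fun n => f n ω) atTop (𝓝 l) := by
  refine hf.submartingale.exists_ae_tendsto_of_bdd (R := (C + μ.real univ).toNNReal) fun n => ?_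
  have hnorm : ∫ ω, ‖f n ω‖ ∂μ ≤ C + μ.real univ :=
    calc ∫ ω, ‖f n ω‖ ∂μ ≤ ∫ ω, (f n ω ^ 2 + 1) ∂μ := by
          refine integral_mono (hf.integrable n).norm
            ((hL2 n).integrable_sq.add (integrable_const 1)) fun ω => ?_
          rw [Real.norm_eq_abs]
          nlinarith [sq_abs (f n ω), sq_nonneg (|f n ω| - 1), sq_nonneg (f n ω)]
      _ = ∫ ω, f n ω ^ 2 ∂μ + μ.real univ := by
          rw [integral_add (hL2 n).integrable_sq (integrable_const 1)]
          simp
      _ ≤ C + μ.real univ := by gcongr; exact hC n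
  rw [eLpNorm_one_eq_lintegral_enorm, ← ofReal_integral_norm_eq_lintegral_enorm (hf.integrable n)]
  exact ENNReal.ofReal_le_ofReal hnorm

/-- **Chow's strong law of large numbers** for martingales with square-integrable increments. -/
theorem martingale_ae_tendsto_div_nat (hf : Martingale f ℱ μ)
    (hL2 : ∀ n, MemLp (f (n + 1) - f n) 2 μ)
    (hsum : Summable fun n : ℕ => (∫ ω, (f (n + 1) ω - f n ω) ^ 2 ∂μ) / (n + 1) ^ 2) :
    ∀ᵐ ω ∂μ, Tendsto (fun n : ℕ => f n ω / n) atTop (𝓝 0) := by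
  set g : ℕ → Ω → ℝ := fun n ω =>
    ∑ k ∈ Finset.range n, (k + 1 : ℝ)⁻¹ * (f (k + 1) ω - f k ω) with hg
  have hgM : Martingale g ℱ μ := martingale_sum_const_mul_sub hf _
  have hgL2 (n : ℕ) : MemLp (g n) 2 μ := memLp_finsetSum _ fun k _ => (hL2 k).const_mul _
  have hgbdd (n : ℕ) : ∫ ω, g n ω ^ 2 ∂μ ≤
      ∑' n : ℕ, (∫ ω, (f (n + 1) ω - f n ω) ^ 2 ∂μ) / (n + 1) ^ 2 := by
    rw [martingale_integral_sq_eq_sum hgM hgL2]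
    simp only [hg, Finset.sum_range_succ, Finset.range_zero, Finset.sum_empty, add_sub_cancel_left,
      mul_pow, integral_const_mul, inv_pow, ne_eq, OfNat.ofNat_ne_zero, not_false_eq_true, zero_pow,
      integral_zero, zero_add]
    simp only [inv_mul_eq_div]
    exact hsum.sum_le_tsum _ fun k _ =>
      div_nonneg (integral_nonneg fun ω => sq_nonneg _) (sq_nonneg _)
  filter_upwards [martingale_ae_exists_tendsto_of_integral_sq_le hgM hgL2 hgbdd] with ω ⟨l, hl⟩
  have hincr : Tendsto (fun n : ℕ => (f n ω - f 0 ω) / n) atTop (𝓝 0) := by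
    simp only [← Finset.sum_range_sub fun k => f k ω]
    exact tendsto_sum_div_of_tendsto_sum_div_succ (by simpa only [hg, inv_mul_eq_div] using hl)
  simpa [← add_div] using hincr.add (tendsto_const_div_atTop_nhds_zero_nat (f 0 ω))

lemma ae_tendsto_martingalePart_div_nat {R : ℝ} (hf : StronglyAdapted ℱ f)
    (hint : ∀ n, Integrable (f n) μ) (hR : ∀ᵐ ω ∂μ, ∀ n, ‖f (n + 1) ω - f n ω‖ ≤ R) :
    ∀ᵐ ω ∂μ, Tendsto (fun n : ℕ => martingalePart f ℱ μ n ω / n) atTop (𝓝 0) := by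
  set M := martingalePart f ℱ μ
  have hM : Martingale M ℱ μ := martingale_martingalePart hf hint
  have hbdd (n : ℕ) : ∀ᵐ ω ∂μ, ‖M (n + 1) ω - M n ω‖ ≤ 2 * R :=
    ae_all_iff.1 (martingalePart_bdd_difference ℱ hR) n
  have hL2 (n : ℕ) : MemLp (M (n + 1) - M n) 2 μ :=
    MemLp.of_bound ((hM.integrable (n + 1)).sub (hM.integrable n)).aestronglyMeasurable _ (hbdd n)
  have hsq (n : ℕ) : ∫ ω, (M (n + 1) ω - M n ω) ^ 2 ∂μ ≤ (2 * R) ^ 2 * μ.real univ := by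
    refine (integral_mono_ae (hL2 n).integrable_sq (integrable_const ((2 * R) ^ 2)) ?_).trans_eq
      (by simp [mul_comm])
    filter_upwards [hbdd n] with ω hω
    exact sq_le_sq' (abs_le.1 hω).1 (abs_le.1 hω).2
  have hsummable : Summable fun n : ℕ => (2 * R) ^ 2 * μ.real univ / ((n : ℝ) + 1) ^ 2 := by
    simpa only [mul_one_div, Nat.cast_add, Nat.cast_one] using ((summable_nat_add_iff 1).2
      (Real.summable_one_div_nat_pow.2 one_lt_two)).mul_left ((2 * R) ^ 2 * μ.real univ)
  refine martingale_ae_tendsto_div_nat hM hL2 (hsummable.of_nonneg_of_le (fun n => ?_) fun n => ?_)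
  · exact div_nonneg (integral_nonneg fun ω => sq_nonneg _) (sq_nonneg _)
  · gcongr
    exact hsq n

theorem ae_tendsto_average_of_condExp_succ_eq_affine {R b r : ℝ} (hf : StronglyAdapted ℱ f)
    (hR : ∀ n, ∀ᵐ ω ∂μ, ‖f n ω‖ ≤ R) (hr : r ≠ 1)
    (hstep : ∀ n, μ[f (n + 1) | ℱ n] =ᵐ[μ] fun ω => b + r * f n ω) :
    ∀ᵐ ω ∂μ, Tendsto (fun n : ℕ => (∑ k ∈ Finset.range n, f k ω) / n) atTop
      (𝓝 (b / (1 - r))) := by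
  have hint (n : ℕ) : Integrable (f n) μ :=
    Integrable.of_bound ((hf n).mono (ℱ.le n)).aestronglyMeasurable R (hR n)
  have hincr : ∀ᵐ ω ∂μ, ∀ n, ‖f (n + 1) ω - f n ω‖ ≤ R + R := by
    filter_upwards [ae_all_iff.2 hR] with ω hω n using norm_sub_le_of_le (hω (n + 1)) (hω n)
  have hdrift (n : ℕ) : μ[f (n + 1) - f n | ℱ n] =ᵐ[μ] fun ω => b - (1 - r) * f n ω := by
    filter_upwards [condExp_sub (hint (n + 1)) (hint n) (ℱ n), hstep n] with ω hsub hω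
    rw [hsub, Pi.sub_apply, hω, condExp_of_stronglyMeasurable (ℱ.le n) (hf n) (hint n)]
    ring
  filter_upwards [ae_tendsto_martingalePart_div_nat hf hint hincr, ae_all_iff.2 hdrift,
    ae_all_iff.2 hR] with ω hM hω hbdd
  have hdecomp (n : ℕ) : ∑ k ∈ Finset.range n, f k ω =
      (n * b + martingalePart f ℱ μ n ω - f n ω) / (1 - r) := by
    have hpred : predictablePart f ℱ μ n ω = n * b - (1 - r) * ∑ k ∈ Finset.range n, f k ω := by
      simp [predictablePart, hω, Finset.mul_sum]
    rw [martingalePart, Pi.sub_apply, hpred, eq_div_iff (sub_ne_zero.2 hr.symm)]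
    ring
  have hf0 : Tendsto (fun n : ℕ => f n ω / n) atTop (𝓝 0) :=
    bdd_le_mul_tendsto_zero' R (Eventually.of_forall hbdd)
      tendsto_inv_atTop_nhds_zero_nat
  have hlim : Tendsto (fun n : ℕ => (b + martingalePart f ℱ μ n ω / n - f n ω / n) / (1 - r))
      atTop (𝓝 (b / (1 - r))) := by
    simpa using ((hM.const_add b).sub hf0).div_const (1 - r)
  refine hlim.congr' ?_
  filter_upwards [eventually_ne_atTop 0] with n hn
  rw [hdecomp]
  field_simp

end MartingaleLaw

namespace RWG

lemma vec_add (x y z x' y' z' : ℝ) :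
    vec x y z + vec x' y' z' = vec (x + x') (y + y') (z + z') := by
  ext r
  fin_cases r <;> simp [vec]

lemma vec_inj {x y z x' y' z' : ℝ} (heq : vec x y z = vec x' y' z') :
    x = x' ∧ y = y' ∧ z = z' := by
  have hcoord := (EuclideanSpace.equiv (Fin 3) ℝ).symm.injective heq
  exact ⟨congrFun hcoord 0, congrFun hcoord 1, congrFun hcoord 2⟩

lemma exists_w_eq (a : ℝ) (i : Fin 2) (r : Fin 3) :
    ∃ s t : ℤ, w a i r = vec (a * ((-1) ^ (i : ℕ) * (1 - 3 / 2 * s)))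
      (a * ((-1) ^ (i : ℕ) * (√3 * t - √3 / 2 * s))) 0 := by
  have hcos₁ : cos (2 * π / 3) = -(1 / 2) := by
    rw [show 2 * π / 3 = π - π / 3 by ring, cos_pi_sub, cos_pi_div_three]
  have hsin₁ : sin (2 * π / 3) = √3 / 2 := by
    rw [show 2 * π / 3 = π - π / 3 by ring, sin_pi_sub, sin_pi_div_three]
  have hcos₂ : cos (4 * π / 3) = -(1 / 2) := by
    rw [show 4 * π / 3 = π / 3 + π by ring, cos_add_pi, cos_pi_div_three]
  have hsin₂ : sin (4 * π / 3) = -(√3 / 2) := by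
    rw [show 4 * π / 3 = π / 3 + π by ring, sin_add_pi, sin_pi_div_three]
  simp only [w, cos_add_nat_mul_pi, sin_add_nat_mul_pi]
  fin_cases r
  · exact ⟨0, 0, by simp⟩
  · refine ⟨1, 1, ?_⟩
    norm_num [hcos₁, hsin₁]
    congr 3
    ring
  · refine ⟨1, 0, ?_⟩
    norm_num [hcos₂, hsin₂]

lemma add_w_mem_V {a h : ℝ} {i j : Fin 2} {x : E} (hx : x ∈ V a h i j) (r : Fin 3) :
    x + w a i r ∈ V a h (1 - i) (1 - j) := by
  obtain ⟨k, l, n, rfl⟩ := hx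
  obtain ⟨s, t, hw⟩ := exists_w_eq a i r
  refine ⟨k - (-1) ^ (i : ℕ) * s, l + (-1) ^ (i : ℕ) * t, n, ?_⟩
  rw [hw, vec_add]
  congr 1
  · fin_cases i <;> fin_cases j <;> simp <;> ring
  · push_cast
    ring
  · fin_cases i <;> fin_cases j <;> simp

lemma add_vertical_mem_V {a h : ℝ} {i : Fin 2} {x : E} (hx : x ∈ V a h i 0) (e : ℤ) :
    x + vec 0 0 ((2 * e + 1) * h) ∈ V a h (1 - i) 0 := by
  obtain ⟨k, l, n, rfl⟩ := hx
  refine ⟨k, l, n + e + (i : ℕ), ?_⟩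
  rw [vec_add]
  congr 1
  · simp
  · simp
  · fin_cases i <;> simp <;> ring

lemma V_index_unique {a h : ℝ} (ha : a ≠ 0) (hh : h ≠ 0) {i j i' j' : Fin 2} {x : E}
    (hx : x ∈ V a h i j) (hx' : x ∈ V a h i' j') : i = i' ∧ j = j' := by
  obtain ⟨k, l, n, rfl⟩ := hx
  obtain ⟨k', l', n', heq⟩ := hx'
  obtain ⟨hfst, -, hthd⟩ := vec_inj heq
  have hmod₃ : 2 * ((-1) ^ ((i : ℕ) + 1) * (if j = 1 then (1 : ℤ) else 0)) + 3 * k =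
      2 * ((-1) ^ ((i' : ℕ) + 1) * (if j' = 1 then (1 : ℤ) else 0)) + 3 * k' := by
    refine Int.cast_injective (α := ℝ) ?_
    push_cast
    linarith [mul_left_cancel₀ ha hfst]
  have hmod₂ : 2 * n + (if i ≠ j then 1 else 0) = 2 * n' + (if i' ≠ j' then 1 else 0) := by
    exact_mod_cast mul_left_cancel₀ hh hthd
  fin_cases i <;> fin_cases j <;> fin_cases i' <;> fin_cases j' <;> simp at hmod₃ hmod₂ ⊢ <;> omega

lemma mem_V_iff_of_mem {a h : ℝ} (ha : a ≠ 0) (hh : h ≠ 0) {i j i' j' : Fin 2} {x : E}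
    (hx : x ∈ V a h i j) : x ∈ V a h i' j' ↔ i' = i ∧ j' = j :=
  ⟨fun hx' => V_index_unique ha hh hx' hx, by rintro ⟨rfl, rfl⟩; exact hx⟩

lemma countable_V (a h : ℝ) (i j : Fin 2) : (V a h i j).Countable := by
  refine (countable_range fun t : ℤ × ℤ × ℤ =>
    vec (a * ((-1 : ℝ) ^ ((i : ℕ) + 1) * (if j = 1 then (1 : ℝ) else 0) + (3 / 2) * t.1))
        (a * ((√3 / 2) * t.1 + √3 * t.2.1))
        (h * (2 * t.2.2 + (if i ≠ j then (1 : ℝ) else 0)))).mono ?_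
  rintro _ ⟨k, l, n, rfl⟩
  exact ⟨(k, l, n), rfl⟩

lemma measurableSet_V (a h : ℝ) (i j : Fin 2) : MeasurableSet (V a h i j) :=
  (countable_V a h i j).measurableSet

/-- The vertex set of the graphite lattice. -/
def lattice (a h : ℝ) : Set E := {x | ∃ i j, x ∈ V a h i j}

lemma measurableSet_lattice (a h : ℝ) : MeasurableSet (lattice a h) := by
  simp only [lattice, ofPred_exists]
  exact .iUnion fun i => .iUnion fun j => measurableSet_V a h i j

lemma zero_mem_V (a h : ℝ) : 0 ∈ V a h 0 0 :=
  ⟨0, 0, 0, by ext r; fin_cases r <;> simp [vec]⟩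

/-- `f` is a bounded Borel function which depends on a vertex only through its type: its value
is `c i j` on `V a h i j`. Nothing else is required of `f` outside the lattice. -/
structure IsTypeFun (a h : ℝ) (c : Fin 2 → Fin 2 → ℝ) (f : E → ℝ) : Prop where
  measurable : Measurable f
  bounded : ∃ C, ∀ x, |f x| ≤ C
  eq_of_mem : ∀ {i j x}, x ∈ V a h i j → f x = c i j

lemma IsTypeFun.sq {a h : ℝ} {c : Fin 2 → Fin 2 → ℝ} {f : E → ℝ} (hf : IsTypeFun a h c f) :
    IsTypeFun a h (c ^ 2) (f ^ 2) where
  measurable := hf.measurable.pow_const 2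
  bounded := by
    obtain ⟨C, hC⟩ := hf.bounded
    exact ⟨C ^ 2, fun x => by simpa using pow_le_pow_left₀ (abs_nonneg _) (hC x) 2⟩
  eq_of_mem hx := by simp [hf.eq_of_mem hx]

lemma isTypeFun_indicator_compl_lattice (a h : ℝ) :
    IsTypeFun a h 0 ((lattice a h)ᶜ.indicator 1) where
  measurable := measurable_one.indicator (measurableSet_lattice a h).compl
  bounded := ⟨1, fun x => by by_cases hx : x ∈ lattice a h <;> simp [hx]⟩
  eq_of_mem hx := indicator_of_notMem (not_not_intro ⟨_, _, hx⟩) _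

/-- The sign of the vertex type `(i, j)` that is positive exactly when `j = σ i`; the choices
`σ = 0` and `σ = id` give the processes `j` and `k`. -/
def typeSign (σ : Fin 2 → Fin 2) (i j : Fin 2) : ℝ := if j = σ i then 1 else -1

lemma isTypeFun_indicator_sub_indicator {a h : ℝ} (ha : a ≠ 0) (hh : h ≠ 0) (σ : Fin 2 → Fin 2) :
    IsTypeFun a h (typeSign σ) fun x =>
      (V a h 0 (σ 0) ∪ V a h 1 (σ 1)).indicator (fun _ => (1 : ℝ)) x -
        (V a h 0 (1 - σ 0) ∪ V a h 1 (1 - σ 1)).indicator (fun _ => (1 : ℝ)) x where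
  measurable := by
    have hV := measurableSet_V a h
    exact (measurable_const.indicator ((hV _ _).union (hV _ _))).sub
      (measurable_const.indicator ((hV _ _).union (hV _ _)))
  bounded := ⟨1, fun x => by unfold indicator; split_ifs <;> norm_num⟩
  eq_of_mem {i j x} hx := by
    have hpos : x ∈ V a h 0 (σ 0) ∪ V a h 1 (σ 1) ↔ j = σ i := by
      simp only [mem_union, mem_V_iff_of_mem ha hh hx]
      fin_cases i <;> simp [eq_comm]
    have hneg : x ∈ V a h 0 (1 - σ 0) ∪ V a h 1 (1 - σ 1) ↔ j ≠ σ i := by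
      simp only [mem_union, mem_V_iff_of_mem ha hh hx]
      fin_cases i <;> simp <;> lia
    by_cases hj : j = σ i <;> simp [indicator, hpos, hneg, typeSign, hj]

/-- The one-step transition operator of the walk on functions of the vertex type. -/
def typeStep (p : ℝ) (c : Fin 2 → Fin 2 → ℝ) (i j : Fin 2) : ℝ :=
  if j = 0 then p * c (1 - i) 0 + (1 - p) * c (1 - i) 1 else c (1 - i) 0

section Walk

variable {Ω : Type} [MeasurableSpace Ω] {P : Measure Ω} {a h p α : ℝ}
  {q : Fin 2 → Fin 2 → Fin 3 → ℝ} {S : ℕ → Ω → E} {F : ℕ → MeasurableSpace Ω}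
  {c : Fin 2 → Fin 2 → ℝ} {f : E → ℝ} {σ : Fin 2 → Fin 2} {X : ℕ → Ω → ℝ}

lemma IsRWG.condExp_typeFun (hRW : IsRWG P a h p α q S F) (hf : IsTypeFun a h c f) (n : ℕ) :
    ∀ᵐ ω ∂P, ∀ i j, S n ω ∈ V a h i j →
      (P[fun ω => f (S (n + 1) ω) | F n]) ω = typeStep p c i j := by
  filter_upwards [hRW.hTrans n f hf.measurable hf.bounded] with ω hω i j hx
  have hmem (i' j' : Fin 2) : S n ω ∈ V a h i' j' ↔ i' = i ∧ j' = j :=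
    mem_V_iff_of_mem hRW.ha.ne' hRW.hh.ne' hx
  have hw (r : Fin 3) : f (S n ω + w a i r) = c (1 - i) (1 - j) := hf.eq_of_mem (add_w_mem_V hx r)
  rw [hω, Finset.sum_eq_single i (fun i' _ hi' => by simp [indicator, hmem, hi']) (by simp)]
  obtain rfl | rfl : j = 0 ∨ j = 1 := by omega
  · have hup : f (S n ω + vec 0 0 h) = c (1 - i) 0 :=
      hf.eq_of_mem (by simpa using add_vertical_mem_V hx 0)
    have hdown : f (S n ω + vec 0 0 (-h)) = c (1 - i) 0 :=
      hf.eq_of_mem (by convert add_vertical_mem_V hx (-1) using 2; norm_num)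
    simp only [indicator, hmem, hw, hup, hdown, typeStep, Fin.sum_univ_three, and_self, reduceIte,
      one_ne_zero, and_false, sub_zero, one_mul, zero_mul, add_zero]
    linear_combination c (1 - i) 1 * hRW.hqsum0 i
  · simp only [indicator, hmem, hw, typeStep, Fin.sum_univ_three, sub_self, and_self, reduceIte,
      zero_ne_one, one_ne_zero, and_false, one_mul, zero_mul, zero_add]
    linear_combination c (1 - i) 0 * hRW.hqsum1 i

lemma IsRWG.measurable_increment (hRW : IsRWG P a h p α q S F) {k n : ℕ} (hk : k < n) :
    Measurable[F n] (fun ω => S (k + 1) ω - S k ω) := by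
  rw [hRW.hF n]
  exact (measurable_pi_apply (X := fun _ : Fin n => E) ⟨k, hk⟩).comp (comap_measurable _)

lemma IsRWG.measurable_walk (hRW : IsRWG P a h p α q S F) (n : ℕ) : Measurable[F n] (S n) := by
  have hS : S n = fun ω => ∑ k ∈ Finset.range n, (S (k + 1) ω - S k ω) := by
    funext ω
    rw [Finset.sum_range_sub (fun k => S k ω), hRW.hS0, sub_zero]
  rw [hS]
  exact Finset.measurable_sum _ fun k hk => hRW.measurable_increment (Finset.mem_range.1 hk)

/-- The natural filtration `F` of the walk, as a bundled `Filtration`. -/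
def IsRWG.filtration (hRW : IsRWG P a h p α q S F) : Filtration ℕ ‹MeasurableSpace Ω› where
  seq := F
  mono' n m hnm := by
    rw [hRW.hF n, ← measurable_iff_comap_le]
    exact @measurable_pi_lambda Ω (Fin n) (fun _ => E) (F m) _ _ fun k =>
      hRW.measurable_increment (k.2.trans_le hnm)
  le' n := by
    rw [hRW.hF n, ← measurable_iff_comap_le]
    exact measurable_pi_lambda _ fun k => (hRW.hSmeas _).sub (hRW.hSmeas _)

lemma IsRWG.ae_mem_lattice (hRW : IsRWG P a h p α q S F) :
    ∀ᵐ ω ∂P, ∀ n, S n ω ∈ lattice a h := by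
  have := hRW.prob
  refine ae_all_iff.2 fun n => ?_
  induction n with
  | zero => exact Eventually.of_forall fun ω => ⟨0, 0, hRW.hS0 ω ▸ zero_mem_V a h⟩
  | succ n ih =>
    have hoff := isTypeFun_indicator_compl_lattice a h
    set off : E → ℝ := (lattice a h)ᶜ.indicator 1
    obtain ⟨C, hC⟩ := hoff.bounded
    have hint : Integrable (fun ω => off (S (n + 1) ω)) P :=
      .of_bound (hoff.measurable.comp (hRW.hSmeas _)).aestronglyMeasurable C
        (.of_forall fun _ => hC _)
    have hzero : ∫ ω, off (S (n + 1) ω) ∂P = 0 := by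
      rw [← integral_condExp (hRW.filtration.le n : F n ≤ _)]
      refine integral_eq_zero_of_ae ?_
      filter_upwards [ih, hRW.condExp_typeFun hoff n] with ω ⟨i, j, hx⟩ hω
      exact (hω i j hx).trans (by simp [typeStep])
    have hnonneg : 0 ≤ fun ω => off (S (n + 1) ω) :=
      fun ω => indicator_nonneg (fun _ _ => zero_le_one) _
    filter_upwards [(integral_eq_zero_iff_of_nonneg hnonneg hint).1 hzero] with ω hω
    simpa [off] using hω

lemma IsRWG.exists_isTypeFun_jP (hRW : IsRWG P a h p α q S F) :
    ∃ f, IsTypeFun a h (typeSign 0) f ∧ jP a h S = fun n ω => f (S n ω) :=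
  ⟨_, isTypeFun_indicator_sub_indicator hRW.ha.ne' hRW.hh.ne' 0, rfl⟩

lemma IsRWG.exists_isTypeFun_kP (hRW : IsRWG P a h p α q S F) :
    ∃ f, IsTypeFun a h (typeSign id) f ∧ kP a h S = fun n ω => f (S n ω) :=
  ⟨_, isTypeFun_indicator_sub_indicator hRW.ha.ne' hRW.hh.ne' id, rfl⟩

lemma IsRWG.jP_of_mem (hRW : IsRWG P a h p α q S F) {i j : Fin 2} {n : ℕ} {ω : Ω}
    (hx : S n ω ∈ V a h i j) : jP a h S n ω = if j = 0 then 1 else -1 :=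
  (isTypeFun_indicator_sub_indicator hRW.ha.ne' hRW.hh.ne' 0).eq_of_mem hx

lemma IsRWG.condVar_typeSign (hRW : IsRWG P a h p α q S F)
    (hX : ∃ f, IsTypeFun a h (typeSign σ) f ∧ X = fun n ω => f (S n ω)) :
    ∀ᵐ ω ∂P, ∀ n, (P[fun ω => X (n + 1) ω ^ 2 | F n]) ω -
      ((P[fun ω => X (n + 1) ω | F n]) ω) ^ 2 = 2 * p * (1 - p) * (1 + jP a h S n ω) := by
  obtain ⟨f, hf, rfl⟩ := hX
  filter_upwards [ae_all_iff.2 (hRW.condExp_typeFun hf), ae_all_iff.2 (hRW.condExp_typeFun hf.sq),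
    hRW.ae_mem_lattice] with ω hmean hsq hmem n
  obtain ⟨i, j, hx⟩ := hmem n
  have hsep : (typeSign σ (1 - i) 0 - typeSign σ (1 - i) 1) ^ 2 = 4 := by
    unfold typeSign
    generalize σ (1 - i) = s
    fin_cases s <;> norm_num
  simp only [Pi.pow_apply] at hsq
  rw [hmean n i j hx, hsq n i j hx, hRW.jP_of_mem hx]
  obtain rfl | rfl : j = 0 ∨ j = 1 := by omega
  · simp only [typeStep, Pi.pow_apply, if_true]
    linear_combination p * (1 - p) * hsep
  · simp [typeStep]

lemma IsRWG.sum_condVar_typeSign (hRW : IsRWG P a h p α q S F)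
    (hX : ∃ f, IsTypeFun a h (typeSign σ) f ∧ X = fun n ω => f (S n ω)) :
    ∀ᵐ ω ∂P, ∀ n : ℕ, ∑ l ∈ Finset.Icc 1 n, ((P[fun ω => X l ω ^ 2 | F (l - 1)]) ω -
      ((P[fun ω => X l ω | F (l - 1)]) ω) ^ 2) =
        2 * p * (1 - p) * (n + ∑ l ∈ Finset.range n, jP a h S l ω) := by
  filter_upwards [hRW.condVar_typeSign hX] with ω hω n
  rw [← Finset.Ico_add_one_right_eq_Icc, Finset.sum_Ico_eq_sum_range]
  simp only [Nat.add_sub_cancel, add_comm 1, hω, ← Finset.mul_sum, Finset.sum_add_distrib,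
    Finset.sum_const, Finset.card_range, nsmul_one]

lemma IsRWG.condExp_jP (hRW : IsRWG P a h p α q S F) (n : ℕ) :
    P[jP a h S (n + 1) | F n] =ᵐ[P] fun ω => p + (p - 1) * jP a h S n ω := by
  obtain ⟨f, hf, hjf⟩ := hRW.exists_isTypeFun_jP
  filter_upwards [hRW.condExp_typeFun hf n, hRW.ae_mem_lattice] with ω hω hmem
  obtain ⟨i, j, hx⟩ := hmem n
  rw [hRW.jP_of_mem hx, hjf, hω i j hx]
  obtain rfl | rfl : j = 0 ∨ j = 1 := by omega
  all_goals simp [typeStep, typeSign]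

lemma IsRWG.ae_tendsto_average_jP (hRW : IsRWG P a h p α q S F) :
    ∀ᵐ ω ∂P, Tendsto (fun n : ℕ => (∑ l ∈ Finset.range n, jP a h S l ω) / n) atTop
      (nhds (p / (2 - p))) := by
  have := hRW.prob
  have hadapted : StronglyAdapted hRW.filtration (jP a h S) := by
    obtain ⟨f, hf, hjf⟩ := hRW.exists_isTypeFun_jP
    exact hjf ▸ fun n => (hf.measurable.comp (hRW.measurable_walk n)).stronglyMeasurable
  have hbdd (n : ℕ) : ∀ᵐ ω ∂P, ‖jP a h S n ω‖ ≤ 1 := by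
    filter_upwards [hRW.ae_mem_lattice] with ω hmem
    obtain ⟨i, j, hx⟩ := hmem n
    rw [hRW.jP_of_mem hx]
    split_ifs <;> simp
  have hne : p - 1 ≠ 1 := by linarith [hRW.hp1]
  convert ae_tendsto_average_of_condExp_succ_eq_affine hadapted hbdd hne hRW.condExp_jP using 5
  ring

lemma IsRWG.ae_tendsto_average_condVar_typeSign (hRW : IsRWG P a h p α q S F)
    (hX : ∃ f, IsTypeFun a h (typeSign σ) f ∧ X = fun n ω => f (S n ω)) :
    ∀ᵐ ω ∂P, Tendsto (fun n : ℕ => (n : ℝ)⁻¹ * ∑ l ∈ Finset.Icc 1 n,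
      ((P[fun ω => X l ω ^ 2 | F (l - 1)]) ω - ((P[fun ω => X l ω | F (l - 1)]) ω) ^ 2))
      atTop (nhds (4 * p * (1 - p) / (2 - p))) := by
  have hne : 2 - p ≠ 0 := by linarith [hRW.hp1]
  filter_upwards [hRW.sum_condVar_typeSign hX, hRW.ae_tendsto_average_jP] with ω hsum hlim
  have hvalue : 2 * p * (1 - p) * (1 + p / (2 - p)) = 4 * p * (1 - p) / (2 - p) := by
    field_simp
    ring
  rw [← hvalue]
  refine ((hlim.const_add 1).const_mul _).congr' ?_
  filter_upwards [eventually_ne_atTop 0] with n hn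
  rw [hsum]
  field_simp

end Walk

end RWG

theorem rwg_indicator_qv {Ω : Type} [MeasurableSpace Ω] (P : Measure Ω)
    (a h p α : ℝ) (q : Fin 2 → Fin 2 → Fin 3 → ℝ)
    (S : ℕ → Ω → RWG.E) (F : ℕ → MeasurableSpace Ω)
    (hRW : RWG.IsRWG P a h p α q S F) :
    (∀ n : ℕ, 1 ≤ n → ∀ᵐ ω ∂P,
      (∑ l ∈ Finset.Icc 1 n,
        ((P[fun ω' => RWG.jP a h S l ω' ^ 2|F (l - 1)]) ω -
          ((P[fun ω' => RWG.jP a h S l ω'|F (l - 1)]) ω) ^ 2) =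
        2 * p * (1 - p) * (n + RWG.JG a h S (n - 1) ω)) ∧
      (∑ l ∈ Finset.Icc 1 n,
        ((P[fun ω' => RWG.kP a h S l ω' ^ 2|F (l - 1)]) ω -
          ((P[fun ω' => RWG.kP a h S l ω'|F (l - 1)]) ω) ^ 2) =
        2 * p * (1 - p) * (n + RWG.JG a h S (n - 1) ω))) ∧
    (0 < p →
      (∀ᵐ ω ∂P, Tendsto (fun n : ℕ => (n : ℝ)⁻¹ *
        ∑ l ∈ Finset.Icc 1 n,
          ((P[fun ω' => RWG.jP a h S l ω' ^ 2|F (l - 1)]) ω -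
            ((P[fun ω' => RWG.jP a h S l ω'|F (l - 1)]) ω) ^ 2))
        atTop (nhds (4 * p * (1 - p) / (2 - p)))) ∧
      (∀ᵐ ω ∂P, Tendsto (fun n : ℕ => (n : ℝ)⁻¹ *
        ∑ l ∈ Finset.Icc 1 n,
          ((P[fun ω' => RWG.kP a h S l ω' ^ 2|F (l - 1)]) ω -
            ((P[fun ω' => RWG.kP a h S l ω'|F (l - 1)]) ω) ^ 2))
        atTop (nhds (4 * p * (1 - p) / (2 - p))))) := by
  refine ⟨fun n hn => ?_, fun _ => ⟨?_, ?_⟩⟩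
  · filter_upwards [hRW.sum_condVar_typeSign hRW.exists_isTypeFun_jP,
      hRW.sum_condVar_typeSign hRW.exists_isTypeFun_kP] with ω hJ hK
    rw [RWG.JG, Nat.sub_add_cancel hn]
    exact ⟨hJ n, hK n⟩
  · exact hRW.ae_tendsto_average_condVar_typeSign hRW.exists_isTypeFun_jP
  · exact hRW.ae_tendsto_average_condVar_typeSign hRW.exists_isTypeFun_kP
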